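/- arXiv:1311.2011 — 2 statements merged into one kernel-verified Lean document; each statement's English description precedes it below -/
import Mathlib

section
/- Let X be a Tychonoff topological space. Player II has a winning strategy in the game G₁(𝒦, 𝒦) played on X if and only if player II has a winning strategy in the game G₁(Ω_{0̄}, Ω_{0̄}) played on C_k(X). -/
open Set Topology

universe u

/-- A bornology on `X`: a collection of subsets covering `X`, closed under
taking subsets and under finite unions. -/
structure IsBornology {X : Type*} (𝔅 : Set (Set X)) : Prop where
  covers : ⋃₀ 𝔅 = Set.univ
  empty_mem : ∅ ∈ 𝔅
  subset_mem : ∀ ⦃A B : Set X⦄, B ∈ 𝔅 → A ⊆ B → A ∈ 𝔅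
  union_mem : ∀ ⦃A B : Set X⦄, A ∈ 𝔅 → B ∈ 𝔅 → A ∪ B ∈ 𝔅

/-- `𝔅` has a compact base: every member of `𝔅` is contained in a compact member of `𝔅`. -/
def HasCompactBase {X : Type*} [TopologicalSpace X] (𝔅 : Set (Set X)) : Prop :=
  ∀ B ∈ 𝔅, ∃ K ∈ 𝔅, IsCompact K ∧ B ⊆ K

/-- The set of continuous real-valued functions on `X` (as a bare type, to be
topologized by a bornology). -/
def CFn (X : Type u) [TopologicalSpace X] : Type u := {f : X → ℝ // Continuous f}

/-- The zero function as an element of `CFn X`. -/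
def zeroFn (X : Type u) [TopologicalSpace X] : CFn X := ⟨fun _ => 0, continuous_const⟩

/-- The basic "ball" `⟨B, ε⟩[f] = {g : ∀ x ∈ B, |f x − g x| < ε}`. -/
def unifBall {X : Type u} [TopologicalSpace X] (f : CFn X) (B : Set X) (ε : ℝ) :
    Set (CFn X) :=
  {g | ∀ x ∈ B, |f.1 x - g.1 x| < ε}

/-- The topology of uniform convergence on members of a bornology `𝔅`:
a set is open iff around each of its points it contains a basic ball
`⟨B, ε⟩[f]` with `B ∈ 𝔅`, `ε > 0`.  This makes `CFn X` into `C_𝔅(X)`. -/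
def bornTopology {X : Type u} [TopologicalSpace X] (𝔅 : Set (Set X))
    (hB : IsBornology 𝔅) : TopologicalSpace (CFn X) where
  IsOpen U := ∀ f ∈ U, ∃ B ∈ 𝔅, ∃ ε > (0 : ℝ), unifBall f B ε ⊆ U
  isOpen_univ := fun f _ => ⟨∅, hB.empty_mem, 1, one_pos, fun _ _ => trivial⟩
  isOpen_inter := by
    intro U V hU hV f hf
    obtain ⟨B₁, hB₁, ε₁, hε₁, h₁⟩ := hU f hf.1
    obtain ⟨B₂, hB₂, ε₂, hε₂, h₂⟩ := hV f hf.2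
    refine ⟨B₁ ∪ B₂, hB.union_mem hB₁ hB₂, min ε₁ ε₂, lt_min hε₁ hε₂, fun g hg => ⟨?_, ?_⟩⟩
    · exact h₁ fun x hx => lt_of_lt_of_le (hg x (Or.inl hx)) (min_le_left _ _)
    · exact h₂ fun x hx => lt_of_lt_of_le (hg x (Or.inr hx)) (min_le_right _ _)
  isOpen_sUnion := by
    intro S hS f hf
    obtain ⟨U, hU, hfU⟩ := hf
    obtain ⟨B, hB', ε, hε, h⟩ := hS U hU f hfU
    exact ⟨B, hB', ε, hε, h.trans (Set.subset_sUnion_of_mem hU)⟩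

/-- `Ω_z`: the family of all subsets of `Z ∖ {z}` having `z` in their closure. -/
def OmegaAt {Z : Type*} [TopologicalSpace Z] (z : Z) : Set (Set Z) :=
  {A | A ⊆ {z}ᶜ ∧ z ∈ closure A}

/-- `𝒢` is a `𝔅`-cover of `X`: every member of `𝔅` is contained in a member of `𝒢`. -/
def IsBCover {X : Type*} (𝔅 : Set (Set X)) (𝒢 : Set (Set X)) : Prop :=
  ∀ B ∈ 𝔅, ∃ G ∈ 𝒢, B ⊆ G

/-- `𝒪_𝔅`: the family of all open `𝔅`-covers of `X`. -/
def OpenBCovers {X : Type*} [TopologicalSpace X] (𝔅 : Set (Set X)) : Set (Set (Set X)) :=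
  {𝒰 | (∀ U ∈ 𝒰, IsOpen U) ∧ IsBCover 𝔅 𝒰}

/-- `𝒢` is a K-cover of `X`: every compact subset of `X` is contained in a member of `𝒢`. -/
def IsKCover {X : Type*} [TopologicalSpace X] (𝒢 : Set (Set X)) : Prop :=
  ∀ K : Set X, IsCompact K → ∃ G ∈ 𝒢, K ⊆ G

/-- `𝒦`: the family of all open K-covers of `X`. -/
def KCovers (X : Type*) [TopologicalSpace X] : Set (Set (Set X)) :=
  {𝒰 | (∀ U ∈ 𝒰, IsOpen U) ∧ IsKCover 𝒰}

/-- Player II has a winning strategy in the game `G₁(𝒜, 𝒞)` (of length `ω`):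
a function assigning to each finite sequence `(A₀, …, Aₙ)` of moves of player I an
element of `Aₙ`, such that in any play following it the chosen points form a member of `𝒞`. -/
def G1WinII {T : Type*} (𝒜 𝒞 : Set (Set T)) : Prop :=
  ∃ σ : (n : ℕ) → (Fin (n + 1) → Set T) → T,
    (∀ (n : ℕ) (h : Fin (n + 1) → Set T), (∀ i, h i ∈ 𝒜) → σ n h ∈ h (Fin.last n)) ∧
    ∀ A : ℕ → Set T, (∀ n, A n ∈ 𝒜) →
      (Set.range fun n => σ n fun i => A i.1) ∈ 𝒞

/-- Player II has a winning strategy in the transfinite game `G₁^α(𝒜, 𝒞)` of length `α`. -/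
def G1WinIIOrd {T : Type*} (α : Ordinal.{0}) (𝒜 𝒞 : Set (Set T)) : Prop :=
  ∃ σ : (γ : {γ : Ordinal.{0} // γ < α}) → ({δ : Ordinal.{0} // δ ≤ γ.1} → Set T) → T,
    (∀ (γ : {γ : Ordinal.{0} // γ < α}) (h : {δ : Ordinal.{0} // δ ≤ γ.1} → Set T),
      (∀ δ, h δ ∈ 𝒜) → σ γ h ∈ h ⟨γ.1, le_rfl⟩) ∧
    ∀ A : {γ : Ordinal.{0} // γ < α} → Set T, (∀ γ, A γ ∈ 𝒜) →
      (Set.range fun γ : {γ : Ordinal.{0} // γ < α} =>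
        σ γ fun δ => A ⟨δ.1, lt_of_le_of_lt δ.2 γ.2⟩) ∈ 𝒞

/-- The selection principle `S₁(𝒜, 𝒞)`. -/
def S1 {T : Type*} (𝒜 𝒞 : Set (Set T)) : Prop :=
  ∀ A : ℕ → Set T, (∀ n, A n ∈ 𝒜) →
    ∃ a : ℕ → T, (∀ n, a n ∈ A n) ∧ Set.range a ∈ 𝒞

/-- `Z` has countable tightness. -/
def CountablyTight (Z : Type*) [TopologicalSpace Z] : Prop :=
  ∀ (z : Z) (A : Set Z), z ∈ closure A → ∃ B ⊆ A, B.Countable ∧ z ∈ closure B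

/-- `Z` is productively countably tight: `Z × Y` has countable tightness
for every countably tight space `Y`. -/
def ProductivelyCountablyTight (Z : Type u) [TopologicalSpace Z] : Prop :=
  ∀ (Y : Type u) [TopologicalSpace Y], CountablyTight Y → CountablyTight (Z × Y)

/-- `Z` has tightness at most `κ`. -/
def TightnessLE (Z : Type u) [TopologicalSpace Z] (κ : Cardinal.{u}) : Prop :=
  ∀ (z : Z) (A : Set Z), z ∈ closure A → ∃ B ⊆ A, Cardinal.mk B ≤ κ ∧ z ∈ closure B

/-- `κ ∈ Sp(Z)`: for every space `Y` of tightness at most `κ`, the product `Z × Y`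
has tightness at most `κ`. -/
def MemSp (Z : Type u) [TopologicalSpace Z] (κ : Cardinal.{u}) : Prop :=
  ∀ (Y : Type u) [TopologicalSpace Y], TightnessLE Y κ → TightnessLE (Z × Y) κ

/-- `G` is a `G_κ`-set: an intersection of at most `κ` open sets. -/
def IsGKappaSet {X : Type u} [TopologicalSpace X] (κ : Cardinal.{u}) (G : Set X) : Prop :=
  ∃ 𝒪 : Set (Set X), (∀ O ∈ 𝒪, IsOpen O) ∧ Cardinal.mk 𝒪 ≤ κ ∧ G = ⋂₀ 𝒪

/-- `G` is a `G_δ`-set: an intersection of countably many open sets. -/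
def IsGDeltaSet {X : Type*} [TopologicalSpace X] (G : Set X) : Prop :=
  ∃ 𝒪 : Set (Set X), (∀ O ∈ 𝒪, IsOpen O) ∧ 𝒪.Countable ∧ G = ⋂₀ 𝒪

/-- A family `ℙ` of collections of subsets of `Z` is `κ`-singular at `z`. -/
def KappaSingularAt {Z : Type u} [TopologicalSpace Z] (κ : Cardinal.{u})
    (ℙ : Set (Set (Set Z))) (z : Z) : Prop :=
  (∀ ξ ∈ ℙ, ∀ A ∈ ξ, Cardinal.mk A ≤ κ) ∧
  (∀ ξ ∈ ℙ, ∀ F : Finset (Set Z), ↑F ⊆ ξ → (⋂₀ (F : Set (Set Z))).Nonempty) ∧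
  (∀ O : Set Z, IsOpen O → z ∈ O → ∃ ξ ∈ ℙ, ∃ A ∈ ξ, A ⊆ O) ∧
  (∀ ℰ ⊆ ℙ, Cardinal.mk ℰ ≤ κ → ∃ c : Set (Set Z) → Set Z,
    (∀ ξ ∈ ℰ, c ξ ∈ ξ) ∧ z ∉ closure (⋃ ξ ∈ ℰ, c ξ))

/-- `X` is an Alster space. -/
def Alster (X : Type*) [TopologicalSpace X] : Prop :=
  ∀ 𝒢 : Set (Set X), (∀ G ∈ 𝒢, IsGDeltaSet G) → IsKCover 𝒢 →
    ∃ 𝒢' ⊆ 𝒢, 𝒢'.Countable ∧ ⋃₀ 𝒢' = Set.univ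

/-- `X` is strongly Alster. -/
def StronglyAlster (X : Type*) [TopologicalSpace X] : Prop :=
  ∀ 𝒢 : Set (Set X), (∀ G ∈ 𝒢, IsGDeltaSet G) → IsKCover 𝒢 →
    ∃ 𝒢' ⊆ 𝒢, 𝒢'.Countable ∧ IsKCover 𝒢'

/-- `X` is productively Lindelöf. -/
def ProductivelyLindelof (X : Type u) [TopologicalSpace X] : Prop :=
  ∀ (Y : Type u) [TopologicalSpace Y], LindelofSpace Y → LindelofSpace (X × Y)

/-- `X` is hemicompact. -/
def Hemicompact (X : Type*) [TopologicalSpace X] : Prop :=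
  ∃ K : ℕ → Set X, (∀ n, IsCompact (K n)) ∧ ∀ C : Set X, IsCompact C → ∃ n, C ⊆ K n

lemma sep_compact {X : Type*} [TopologicalSpace X] [T35Space X] {K U : Set X}
    (hK : IsCompact K) (hU : IsOpen U) (hKU : K ⊆ U) :
    ∃ f : C(X, ℝ), (∀ x ∈ K, f x = 0) ∧ (∀ x, x ∉ U → f x = 1) := by
  obtain ⟨V, hV, rfl⟩ := (isInducing_stoneCechUnit (X := X)).isOpen_iff.1 hU
  obtain ⟨f, h0, h1, -⟩ := exists_continuous_zero_one_of_isClosed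
    (hK.image continuous_stoneCechUnit).isClosed hV.isClosed_compl
    (by
      rw [Set.disjoint_left]
      rintro _ ⟨x, hx, rfl⟩ h
      exact h (hKU hx))
  refine ⟨f.comp ⟨stoneCechUnit, continuous_stoneCechUnit⟩, ?_, ?_⟩
  · intro x hx
    exact h0 ⟨x, hx, rfl⟩
  · intro x hx
    exact h1 hx

lemma zero_mem_closure_iff {X : Type*} [TopologicalSpace X] (A : Set C(X, ℝ)) :
    (0 : C(X, ℝ)) ∈ closure A ↔
      ∀ K : Set X, IsCompact K → ∀ ε > (0 : ℝ), ∃ f ∈ A, ∀ x ∈ K, |f x| < ε := by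
  have hb := nhds_basis_uniformity'
    (Metric.uniformity_basis_dist (α := ℝ)).compactConvergenceUniformity (x := (0 : C(X, ℝ)))
  rw [mem_closure_iff_nhds_basis hb]
  simp [UniformSpace.ball, Real.dist_eq]
  exact ⟨fun h K hK ε hε => h K ε hK hε, fun h K ε hK hε => h K hK ε hε⟩

lemma G1_transfer {S T : Type*} [Nonempty T] {𝒜 𝒞 : Set (Set S)} {ℬ 𝒟 : Set (Set T)}
    (Φ : ℕ → Set T → Set S)
    (h1 : ∀ j, ∀ B ∈ ℬ, Φ j B ∈ 𝒜)
    (R : ℕ → S → T → Prop)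
    (h2 : ∀ j, ∀ B ∈ ℬ, ∀ s ∈ Φ j B, ∃ t ∈ B, R j s t)
    (h3 : ∀ (B : ℕ → Set T) (t : ℕ → T) (s : ℕ → ℕ → S), (∀ n, B n ∈ ℬ) → (∀ n, t n ∈ B n) →
      (∀ j k, R j (s j k) (t (Nat.pair j k))) → (∀ j, range (s j) ∈ 𝒞) → range t ∈ 𝒟) :
    G1WinII 𝒜 𝒞 → G1WinII ℬ 𝒟 := by
  classical
  rintro ⟨σ, hσ, hw⟩
  have h2' : ∀ (j : ℕ) (B : Set T) (s : S), ∃ t, B ∈ ℬ → s ∈ Φ j B → t ∈ B ∧ R j s t := by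
    intro j B s
    by_cases hB : B ∈ ℬ
    · by_cases hs : s ∈ Φ j B
      · obtain ⟨t, ht⟩ := h2 j B hB s hs
        exact ⟨t, fun _ _ => ht⟩
      · exact ⟨Classical.arbitrary T, fun _ h => absurd h hs⟩
    · exact ⟨Classical.arbitrary T, fun h => absurd h hB⟩
  choose Ψ hΨ using h2'
  have hle : ∀ (n : ℕ) (i : Fin (n.unpair.2 + 1)), Nat.pair n.unpair.1 i.1 < n + 1 := by
    intro n i
    have : Nat.pair n.unpair.1 i.1 ≤ Nat.pair n.unpair.1 n.unpair.2 := by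
      rcases (Nat.lt_succ_iff.1 i.2).lt_or_eq with h | h
      · exact (Nat.pair_lt_pair_right _ h).le
      · rw [h]
    rw [Nat.pair_unpair] at this
    omega
  let ρ : (n : ℕ) → (Fin (n + 1) → Set T) → S := fun n h =>
    σ n.unpair.2 (fun i => Φ n.unpair.1 (h ⟨Nat.pair n.unpair.1 i.1, hle n i⟩))
  have hρ : ∀ (n : ℕ) (h : Fin (n + 1) → Set T), (∀ i, h i ∈ ℬ) →
      ρ n h ∈ Φ n.unpair.1 (h (Fin.last n)) := by
    intro n h hh
    have := hσ n.unpair.2 (fun i => Φ n.unpair.1 (h ⟨Nat.pair n.unpair.1 i.1, hle n i⟩))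
      (fun i => h1 _ _ (hh _))
    have e : (⟨Nat.pair n.unpair.1 (Fin.last n.unpair.2).1, hle n (Fin.last _)⟩ : Fin (n + 1))
        = Fin.last n := by
      ext
      simp
    simp only [e] at this
    exact this
  refine ⟨fun n h => Ψ n.unpair.1 (h (Fin.last n)) (ρ n h), ?_, ?_⟩
  · intro n h hh
    exact (hΨ _ _ _ (hh _) (hρ n h hh)).1
  · intro A hA
    refine h3 A _ (fun j k => σ k (fun i => Φ j (A (Nat.pair j i.1)))) hA ?_ ?_ ?_
    · intro n
      exact (hΨ _ _ _ (hA _) (hρ n (fun i => A i.1) (fun i => hA _))).1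
    · intro j k
      have h := (hΨ _ _ _ (hA _) (hρ (Nat.pair j k) (fun i => A i.1) (fun i => hA _))).2
      have key : ρ (Nat.pair j k) (fun i => A i.1) = σ k (fun i => Φ j (A (Nat.pair j i.1))) := by
        have : ∀ p : ℕ × ℕ, p = (j, k) →
            σ p.2 (fun i : Fin (p.2 + 1) => Φ p.1 (A (Nat.pair p.1 i.1))) =
              σ k (fun i => Φ j (A (Nat.pair j i.1))) := by
          rintro _ rfl
          rfl
        exact this _ (Nat.unpair_pair j k)
      rw [← key]
      simpa only [Nat.unpair_pair] using h
    · intro j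
      exact hw (fun k => Φ j (A (Nat.pair j k))) (fun k => h1 _ _ (hA _))

/-- Player II has a winning strategy in `G₁(𝒦, 𝒦)` on `X` iff
player II has a winning strategy in `G₁(Ω_{0̄}, Ω_{0̄})` on `C_k(X)`
(the compact-open topology on `C(X, ℝ)`). -/
theorem stmt4 {X : Type*} [TopologicalSpace X] [T35Space X] :
    G1WinII (KCovers X) (KCovers X) ↔
      G1WinII (OmegaAt (0 : C(X, ℝ))) (OmegaAt (0 : C(X, ℝ))) := by
  constructor
  · refine G1_transfer (fun j B => {U | ∃ f ∈ B, U = {x | |f x| < 1 / ((j : ℝ) + 1)}}) ?_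
      (fun j U f => U = {x | |f x| < 1 / ((j : ℝ) + 1)}) ?_ ?_
    · rintro j B ⟨-, hB⟩
      refine ⟨?_, ?_⟩
      · rintro _ ⟨f, -, rfl⟩
        exact isOpen_lt (by fun_prop) continuous_const
      · intro K hK
        obtain ⟨f, hf, h⟩ := (zero_mem_closure_iff B).1 hB K hK (1 / ((j : ℝ) + 1)) (by positivity)
        exact ⟨_, ⟨f, hf, rfl⟩, h⟩
    · rintro j B - _ ⟨f, hf, rfl⟩
      exact ⟨f, hf, rfl⟩
    · intro B t s hB ht hR hs
      refine ⟨?_, ?_⟩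
      · rintro _ ⟨n, rfl⟩
        exact (hB n).1 (ht n)
      · rw [zero_mem_closure_iff]
        intro K hK ε hε
        obtain ⟨j, hj⟩ := exists_nat_one_div_lt hε
        obtain ⟨_, ⟨k, rfl⟩, hk⟩ := (hs j).2 K hK
        refine ⟨_, ⟨Nat.pair j k, rfl⟩, fun x hx => ?_⟩
        have := hk hx
        rw [hR j k] at this
        exact lt_trans this hj
  · rcases isEmpty_or_nonempty X with hX | ⟨⟨x₀⟩⟩
    · intro _
      refine ⟨fun _ _ => ∅, ?_, ?_⟩
      · intro n h hh
        obtain ⟨G, hG, -⟩ := (hh (Fin.last n)).2 ∅ isCompact_empty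
        rwa [Set.eq_empty_of_isEmpty G] at hG
      · intro A hA
        refine ⟨?_, ?_⟩
        · rintro _ ⟨n, rfl⟩
          exact isOpen_empty
        · intro K _
          exact ⟨∅, ⟨0, rfl⟩, (Set.eq_empty_of_isEmpty K).subset⟩
    · refine G1_transfer (fun _ 𝒰 => {f | f ≠ 0 ∧ ∃ U ∈ 𝒰, ∀ x, x ∉ U → 1 ≤ |f x|}) ?_
        (fun _ f U => ∀ x, x ∉ U → 1 ≤ |f x|) ?_ ?_
      · rintro - 𝒰 ⟨ho, hc⟩
        refine ⟨fun f hf => hf.1, ?_⟩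
        rw [zero_mem_closure_iff]
        intro K hK ε hε
        obtain ⟨U, hU, hKU⟩ := hc K hK
        obtain ⟨f, h0, h1⟩ := sep_compact hK (ho U hU) hKU
        refine ⟨f ⊔ ContinuousMap.const X (ε / 2), ⟨?_, U, hU, ?_⟩, ?_⟩
        · intro h
          have := congrArg (fun g : C(X, ℝ) => g x₀) h
          have h2 : f x₀ ⊔ (ε / 2) = 0 := this
          have := le_max_right (f x₀) (ε / 2)
          linarith
        · intro x hx
          have h2 : (1 : ℝ) ≤ f x ⊔ (ε / 2) := by
            rw [h1 x hx]
            exact le_max_left _ _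
          exact h2.trans (le_abs_self _)
        · intro x hx
          change |f x ⊔ (ε / 2)| < ε
          rw [h0 x hx, max_eq_right (by linarith), abs_of_pos (by linarith)]
          linarith
      · rintro - 𝒰 - f ⟨-, U, hU, h⟩
        exact ⟨U, hU, h⟩
      · intro B t s hB ht hR hs
        refine ⟨?_, ?_⟩
        · rintro _ ⟨n, rfl⟩
          exact (hB n).1 _ (ht n)
        · intro K hK
          obtain ⟨_, ⟨k, rfl⟩, hk⟩ := (zero_mem_closure_iff _).1 (hs 0).2 K hK 1 one_pos
          refine ⟨_, ⟨Nat.pair 0 k, rfl⟩, fun x hx => ?_⟩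
          by_contra hn
          exact absurd (hk x hx) (not_lt.2 (hR 0 k x hn))
end

section
/- Let X be a Tychonoff topological space, let 𝔅 be a bornology with compact base on X, and let κ be an infinite cardinal. Then κ ∈ Sp(C_𝔅(X)) if and only if every 𝔅-cover of X consisting of G_κ-sets has a 𝔅-subcover of cardinality at most κ. -/
open Set Topology

universe u

theorem aux_card_iUnion {α ι : Type u} (f : ι → Set α) (κ : Cardinal.{u})
    (hκ : Cardinal.aleph0 ≤ κ) (hι : Cardinal.mk ι ≤ κ) (hf : ∀ i, Cardinal.mk (f i) ≤ κ) :
    Cardinal.mk (⋃ i, f i) ≤ κ := by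
  refine (Cardinal.mk_iUnion_le f).trans ?_
  calc _ ≤ κ * κ := mul_le_mul' hι (ciSup_le' hf)
    _ = κ := Cardinal.mul_eq_self hκ

theorem aux_card_finset {α : Type u} (κ : Cardinal.{u})
    (hκ : Cardinal.aleph0 ≤ κ) (hα : Cardinal.mk α ≤ κ) : Cardinal.mk (Finset α) ≤ κ := by
  rcases finite_or_infinite α with h | h
  · exact (Cardinal.lt_aleph0_of_finite (Finset α)).le.trans hκ
  · rw [Cardinal.mk_finset_of_infinite]; exact hα

theorem aux_sep {X : Type u} [TopologicalSpace X] [T35Space X] (K U : Set X)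
    (hK : IsCompact K) (hU : IsOpen U) (hKU : K ⊆ U) :
    ∃ g : CFn X, (∀ x ∈ K, g.1 x = 0) ∧ ∀ x, x ∉ U → g.1 x = 1 := by
  obtain ⟨V, hV, rfl⟩ := (isInducing_stoneCechUnit (X := X)).isOpen_iff.1 hU
  have hc : IsClosed (stoneCechUnit '' K) := (hK.image continuous_stoneCechUnit).isClosed
  obtain ⟨f, h0, h1, -⟩ := exists_continuous_zero_one_of_isClosed hc hV.isClosed_compl (by
    rw [Set.disjoint_compl_right_iff_subset]
    rintro _ ⟨x, hx, rfl⟩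
    exact hKU hx)
  refine ⟨⟨fun x => f (stoneCechUnit x), f.continuous.comp continuous_stoneCechUnit⟩, ?_, ?_⟩
  · intro x hx
    exact h0 ⟨x, hx, rfl⟩
  · intro x hx
    exact h1 hx

theorem aux_ball_nhds {X : Type u} [TopologicalSpace X]
    (𝔅 : Set (Set X)) (hB : IsBornology 𝔅) (hcb : HasCompactBase 𝔅) (f : CFn X)
    (B : Set X) (hBm : B ∈ 𝔅) (ε : ℝ) (hε : 0 < ε) :
    unifBall f B ε ∈ @nhds _ (bornTopology 𝔅 hB) f := by
  letI := bornTopology 𝔅 hB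
  obtain ⟨K, hK, hKc, hBK⟩ := hcb B hBm
  refine mem_nhds_iff.2 ⟨unifBall f K ε, fun g hg x hx => hg x (hBK hx), ?_,
    fun x _ => by simpa using hε⟩
  intro g hg
  rcases K.eq_empty_or_nonempty with rfl | hne
  · exact ⟨∅, hK, 1, one_pos, fun h _ x hx => hx.elim⟩
  · obtain ⟨x₀, hx₀, hmax⟩ := hKc.exists_isMaxOn hne
      (f := fun x => |f.1 x - g.1 x|) ((f.2.sub g.2).abs.continuousOn)
    refine ⟨K, hK, ε - |f.1 x₀ - g.1 x₀|, sub_pos.2 (hg x₀ hx₀), fun h hh x hx => ?_⟩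
    have h1 := hh x hx
    have h2 : |f.1 x - g.1 x| ≤ |f.1 x₀ - g.1 x₀| := hmax hx
    have h3 := abs_sub_le (f.1 x) (g.1 x) (h.1 x)
    linarith

theorem aux_nhds {X : Type u} [TopologicalSpace X]
    (𝔅 : Set (Set X)) (hB : IsBornology 𝔅) (f : CFn X) (U : Set (CFn X))
    (hU : U ∈ @nhds _ (bornTopology 𝔅 hB) f) :
    ∃ B ∈ 𝔅, ∃ ε > (0 : ℝ), unifBall f B ε ⊆ U := by
  letI := bornTopology 𝔅 hB
  obtain ⟨V, hVU, hV, hf⟩ := mem_nhds_iff.1 hU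
  obtain ⟨B, hBm, ε, hε, h⟩ := hV f hf
  exact ⟨B, hBm, ε, hε, h.trans hVU⟩

/-- The fan space: one nonisolated point, with a filter of finite sets along each spine. -/
def fanTop {I : Type u} (S : I → Type u) : TopologicalSpace (Option (Σ i, Finset (S i))) where
  IsOpen U := none ∈ U → ∀ i, ∃ F : Finset (S i), ∀ F', F ⊆ F' → some ⟨i, F'⟩ ∈ U
  isOpen_univ := fun _ _ => ⟨∅, fun _ _ => trivial⟩
  isOpen_inter := by
    classical
    intro U V hU hV h i
    obtain ⟨F, hF⟩ := hU h.1 i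
    obtain ⟨F₂, hF₂⟩ := hV h.2 i
    exact ⟨F ∪ F₂, fun F' h' => ⟨hF _ (Finset.union_subset_left h'),
      hF₂ _ (Finset.union_subset_right h')⟩⟩
  isOpen_sUnion := by
    intro T hT h i
    obtain ⟨U, hU, hn⟩ := h
    obtain ⟨F, hF⟩ := hT U hU hn i
    exact ⟨F, fun F' h' => ⟨U, hU, hF _ h'⟩⟩

theorem fan_tight {I : Type u} (S : I → Type u) (κ : Cardinal.{u})
    (hκ : Cardinal.aleph0 ≤ κ) (hS : ∀ i, Cardinal.mk (S i) ≤ κ) :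
    @TightnessLE _ (fanTop S) κ := by
  letI := fanTop S
  intro z A hz
  have hone : (1 : Cardinal.{u}) ≤ κ := Cardinal.one_le_aleph0.trans hκ
  by_cases hzA : z ∈ A
  · exact ⟨{z}, by simpa using hzA, by simpa using hone, subset_closure rfl⟩
  rcases z with _ | p
  · -- some spine meets A cofinally
    have : ∃ i, ∀ F : Finset (S i), ∃ F', F ⊆ F' ∧ some ⟨i, F'⟩ ∈ A := by
      by_contra hcon
      push Not at hcon
      choose F hF using hcon
      have ho : IsOpen (Aᶜ) := fun _ i => ⟨F i, fun F' h => hF i F' h⟩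
      obtain ⟨y, hy, hyA⟩ := mem_closure_iff.1 hz _ ho hzA
      exact hy hyA
    obtain ⟨i, hi⟩ := this
    refine ⟨A ∩ Set.range (fun F : Finset (S i) => some ⟨i, F⟩), Set.inter_subset_left, ?_, ?_⟩
    · exact (Cardinal.mk_le_mk_of_subset Set.inter_subset_right).trans
        (Cardinal.mk_range_le.trans (aux_card_finset κ hκ (hS i)))
    · rw [mem_closure_iff]
      intro o ho hno
      obtain ⟨F, hF⟩ := ho hno i
      obtain ⟨F', h1, h2⟩ := hi F
      exact ⟨_, hF F' h1, h2, F', rfl⟩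
  · have ho : IsOpen ({some p} : Set (Option (Σ i, Finset (S i)))) := by
      intro h
      simp at h
    obtain ⟨y, hy, hyA⟩ := mem_closure_iff.1 hz _ ho rfl
    rw [Set.mem_singleton_iff] at hy
    exact absurd (hy ▸ hyA) hzA

theorem stmt5_mpr {X : Type u} [TopologicalSpace X]
    (𝔅 : Set (Set X)) (hB : IsBornology 𝔅) (hcb : HasCompactBase 𝔅)
    (κ : Cardinal.{u}) (hκ : Cardinal.aleph0 ≤ κ)
    (H : ∀ 𝒢 : Set (Set X), (∀ G ∈ 𝒢, IsGKappaSet κ G) → IsBCover 𝔅 𝒢 →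
        ∃ 𝒢' ⊆ 𝒢, Cardinal.mk 𝒢' ≤ κ ∧ IsBCover 𝔅 𝒢') :
    @MemSp (CFn X) (bornTopology 𝔅 hB) κ := by
  letI := bornTopology 𝔅 hB
  intro Y _ hY
  rintro ⟨f, y⟩ A hA
  let N := ULift.{u} ℕ
  have hN : Cardinal.mk N ≤ κ := by simpa [N] using hκ
  let e : N → ℝ := fun n => 1 / ((n.down : ℝ) + 1)
  have he : ∀ n, 0 < e n := fun n => Nat.one_div_pos_of_nat
  have step : ∀ (K : 𝔅) (n : N), ∃ D ⊆ A, Cardinal.mk D ≤ κ ∧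
      (∀ p ∈ D, p.1 ∈ unifBall f K.1 (e n)) ∧ y ∈ closure (Prod.snd '' D) := by
    rintro ⟨K, hK⟩ n
    have hcl : y ∈ closure (Prod.snd '' (A ∩ {p | p.1 ∈ unifBall f K (e n)})) := by
      rw [mem_closure_iff_nhds]
      intro t ht
      obtain ⟨p, hp, hpA⟩ := mem_closure_iff_nhds.1 hA _
        (prod_mem_nhds (aux_ball_nhds 𝔅 hB hcb f K hK (e n) (he n)) ht)
      exact ⟨p.2, hp.2, p, ⟨hpA, hp.1⟩, rfl⟩
    obtain ⟨C, hC, hCκ, hCy⟩ := hY _ _ hcl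
    have hC' : ∀ c : Y, ∃ p : CFn X × Y,
        c ∈ C → p ∈ A ∩ {p | p.1 ∈ unifBall f K (e n)} ∧ p.2 = c := by
      intro c
      by_cases hc : c ∈ C
      · obtain ⟨p, hp, hpc⟩ := hC hc
        exact ⟨p, fun _ => ⟨hp, hpc⟩⟩
      · exact ⟨(f, y), fun h => absurd h hc⟩
    choose s hs using hC'
    refine ⟨s '' C, ?_, Cardinal.mk_image_le.trans hCκ, ?_, ?_⟩
    · rintro _ ⟨c, hc, rfl⟩
      exact (hs c hc).1.1
    · rintro _ ⟨c, hc, rfl⟩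
      exact (hs c hc).1.2
    · refine closure_mono ?_ hCy
      intro c hc
      exact ⟨s c, ⟨c, hc, rfl⟩, (hs c hc).2⟩
  choose D hDA hDκ hDball hDy using step
  let G : 𝔅 → Set X := fun K => ⋂₀ (⋃ n : N, (fun p => {x | |f.1 x - p.1.1 x| < e n}) '' D K n)
  have hGK : ∀ K : 𝔅, K.1 ⊆ G K := by
    intro K x hx
    simp only [G, Set.mem_sInter, Set.mem_iUnion]
    rintro _ ⟨n, p, hp, rfl⟩
    exact hDball K n p hp x hx
  obtain ⟨𝒢', hsub, hcard, hcov⟩ := H (Set.range G) (by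
    rintro _ ⟨K, rfl⟩
    refine ⟨_, ?_, ?_, rfl⟩
    · intro O hO
      obtain ⟨n, p, hp, rfl⟩ := Set.mem_iUnion.1 hO
      exact isOpen_lt ((f.2.sub p.1.2).abs) continuous_const
    · exact aux_card_iUnion _ κ hκ hN (fun n => Cardinal.mk_image_le.trans (hDκ K n)))
    (fun B hBm => ⟨G ⟨B, hBm⟩, ⟨_, rfl⟩, hGK ⟨B, hBm⟩⟩)
  have hch : ∀ g : 𝒢', ∃ K, G K = g.1 := fun g => hsub g.2
  choose k hk using hch
  refine ⟨⋃ g : 𝒢', ⋃ n : N, D (k g) n, ?_, ?_, ?_⟩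
  · exact Set.iUnion_subset fun g => Set.iUnion_subset fun n => hDA _ _
  · exact aux_card_iUnion _ κ hκ hcard fun g => aux_card_iUnion _ κ hκ hN fun n => hDκ _ _
  · rw [mem_closure_iff_nhds]
    intro t ht
    rw [nhds_prod_eq, Filter.mem_prod_iff] at ht
    obtain ⟨U, hU, V, hV, hUV⟩ := ht
    obtain ⟨B, hBm, ε, hε, hball⟩ := aux_nhds 𝔅 hB f U hU
    obtain ⟨g, hg, hBg⟩ := hcov B hBm
    obtain ⟨n, hn⟩ := exists_nat_one_div_lt hε
    obtain ⟨_, hyV, p, hp, rfl⟩ := mem_closure_iff_nhds.1 (hDy (k ⟨g, hg⟩) ⟨n⟩) V hV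
    refine ⟨p, hUV ⟨hball ?_, hyV⟩, Set.mem_iUnion.2 ⟨⟨g, hg⟩, Set.mem_iUnion.2 ⟨⟨n⟩, hp⟩⟩⟩
    intro x hx
    have hx' : x ∈ G (k ⟨g, hg⟩) := by rw [hk]; exact hBg hx
    have := hx' _ (Set.mem_iUnion.2 ⟨⟨n⟩, p, hp, rfl⟩)
    exact lt_trans this hn

theorem stmt5_mp {X : Type u} [TopologicalSpace X] [T35Space X]
    (𝔅 : Set (Set X)) (hB : IsBornology 𝔅) (hcb : HasCompactBase 𝔅)
    (κ : Cardinal.{u}) (hκ : Cardinal.aleph0 ≤ κ)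
    (H : @MemSp (CFn X) (bornTopology 𝔅 hB) κ)
    (𝒢 : Set (Set X)) (h𝒢 : ∀ G ∈ 𝒢, IsGKappaSet κ G) (hcov : IsBCover 𝔅 𝒢) :
    ∃ 𝒢' ⊆ 𝒢, Cardinal.mk 𝒢' ≤ κ ∧ IsBCover 𝔅 𝒢' := by
  letI := bornTopology 𝔅 hB
  let I := {K : Set X // K ∈ 𝔅 ∧ IsCompact K}
  have h1 : ∀ K : I, ∃ G ∈ 𝒢, K.1 ⊆ G := fun K => hcov K.1 K.2.1
  choose G hG hKG using h1
  have h2 : ∀ K : I, IsGKappaSet κ (G K) := fun K => h𝒢 _ (hG K)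
  choose 𝒪 hO hOκ hGO using h2
  let S : I → Type u := fun K => 𝒪 K
  have h3 : ∀ p : Σ K, Finset (S K), ∃ g : CFn X, (∀ x ∈ p.1.1, g.1 x = 0) ∧
      ∀ x, x ∉ (⋂ O ∈ p.2, (O : 𝒪 p.1).1) → g.1 x = 1 := by
    rintro ⟨K, F⟩
    refine aux_sep _ _ K.2.2 ?_ ?_
    · exact isOpen_biInter_finset fun O _ => hO K O.1 O.2
    · intro x hx
      simp only [Set.mem_iInter]
      intro O _
      have := hKG K hx
      rw [hGO K] at this
      exact this O.1 O.2
  choose g hg0 hg1 using h3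
  letI := fanTop S
  have key := H _ (fan_tight S κ hκ hOκ) (zeroFn X, none)
    (Set.range fun p => (g p, some p)) (by
      rw [mem_closure_iff_nhds]
      intro t ht
      rw [nhds_prod_eq, Filter.mem_prod_iff] at ht
      obtain ⟨U, hU, V, hV, hUV⟩ := ht
      obtain ⟨B, hBm, ε, hε, hball⟩ := aux_nhds 𝔅 hB _ U hU
      obtain ⟨K, hK, hKc, hBK⟩ := hcb B hBm
      obtain ⟨W, hWV, hW, hnW⟩ := mem_nhds_iff.1 hV
      obtain ⟨F, hF⟩ := hW hnW ⟨K, hK, hKc⟩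
      refine ⟨_, hUV ⟨hball ?_, hWV (hF F subset_rfl)⟩, ⟨⟨K, hK, hKc⟩, F⟩, rfl⟩
      intro x hx
      have := hg0 ⟨⟨K, hK, hKc⟩, F⟩ x (hBK hx)
      simpa [zeroFn, this] using hε)
  obtain ⟨A, hA, hAκ, hAcl⟩ := key
  refine ⟨(fun p : CFn X × Option (Σ K, Finset (S K)) => p.2.elim ∅ fun q => G q.1) '' A,
    ?_, Cardinal.mk_image_le.trans hAκ, ?_⟩
  · rintro _ ⟨p, hp, rfl⟩
    obtain ⟨q, rfl⟩ := hA hp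
    exact hG q.1
  · intro B hBm
    by_contra hcon
    push Not at hcon
    have hc : ∀ K : I, ∃ F : Finset (S K), (∃ F', (g ⟨K, F'⟩, some ⟨K, F'⟩) ∈ A) →
        ∀ F', F ⊆ F' → ∃ x ∈ B, (g ⟨K, F'⟩).1 x = 1 := by
      intro K
      by_cases hK : ∃ F', (g ⟨K, F'⟩, some ⟨K, F'⟩) ∈ A
      · obtain ⟨F', hF'⟩ := hK
        have := hcon (G K) ⟨_, hF', rfl⟩
        obtain ⟨x, hxB, hx⟩ := Set.not_subset.1 this
        rw [hGO K, Set.mem_sInter] at hx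
        push Not at hx
        obtain ⟨O, hOm, hxO⟩ := hx
        refine ⟨{⟨O, hOm⟩}, fun _ F' h => ⟨x, hxB, hg1 ⟨K, F'⟩ x ?_⟩⟩
        intro hx'
        exact hxO (Set.mem_iInter₂.1 hx' ⟨O, hOm⟩ (Finset.singleton_subset_iff.1 h))
      · exact ⟨∅, fun h => absurd h hK⟩
    choose F hF using hc
    let U : Set (Option (Σ K, Finset (S K))) := {y | ∀ K F', y = some ⟨K, F'⟩ → F K ⊆ F'}
    have hU : IsOpen U := by
      intro _ K
      refine ⟨F K, fun F' h K' F'' heq => ?_⟩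
      cases heq
      exact h
    have hUn : U ∈ 𝓝 (none : Option (Σ K, Finset (S K))) :=
      hU.mem_nhds (fun K F' h => by cases h)
    obtain ⟨p, hp, hpA⟩ := mem_closure_iff_nhds.1 hAcl _
      (prod_mem_nhds (aux_ball_nhds 𝔅 hB hcb (zeroFn X) B hBm 1 one_pos) hUn)
    obtain ⟨⟨K, F'⟩, rfl⟩ := hA hpA
    obtain ⟨x, hxB, hx⟩ := hF K ⟨F', hpA⟩ F' (hp.2 K F' rfl)
    have := hp.1 x hxB
    simp [zeroFn, hx] at this

/-- For a Tychonoff `X`, a bornology `𝔅` with compact base and an infinite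
cardinal `κ`: `κ ∈ Sp(C_𝔅(X))` iff every `𝔅`-cover of `X` by `G_κ`-sets has a
`𝔅`-subcover of cardinality at most `κ`. -/
theorem stmt5 {X : Type u} [TopologicalSpace X] [T35Space X]
    (𝔅 : Set (Set X)) (hB : IsBornology 𝔅) (hcb : HasCompactBase 𝔅)
    (κ : Cardinal.{u}) (hκ : Cardinal.aleph0 ≤ κ) :
    @MemSp (CFn X) (bornTopology 𝔅 hB) κ ↔
      ∀ 𝒢 : Set (Set X), (∀ G ∈ 𝒢, IsGKappaSet κ G) → IsBCover 𝔅 𝒢 →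
        ∃ 𝒢' ⊆ 𝒢, Cardinal.mk 𝒢' ≤ κ ∧ IsBCover 𝔅 𝒢' := by
  exact ⟨fun H 𝒢 h𝒢 hcov => stmt5_mp 𝔅 hB hcb κ hκ H 𝒢 h𝒢 hcov,
    stmt5_mpr 𝔅 hB hcb κ hκ⟩
end
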